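/- arXiv:1807.11166 — 2 statements merged into one kernel-verified Lean document; each statement's English description precedes it below -/
import Mathlib

section
/- Let X and Y be real normed linear spaces with X strictly convex and reflexive (and X complete), and let T : X → Y be a compact bounded linear operator that is left symmetric in the operator space with ‖T‖ = 1. If x₁ ∈ M_T, y is a unit vector of X, and y ⊥_B x₁, then Ty = 0. -/
open Filter Topology Set

/-- Birkhoff–James orthogonality: `x ⊥_B y` iff `‖x + t • y‖ ≥ ‖x‖` for all real `t`.
For bounded linear operators this is orthogonality in the operator norm. -/
def BJOrth {E : Type*} [NormedAddCommGroup E] [NormedSpace ℝ E] (x y : E) : Prop :=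
  ∀ t : ℝ, ‖x‖ ≤ ‖x + t • y‖

/-- A point `x` is left symmetric if `x ⊥_B y` implies `y ⊥_B x` for all `y`. -/
def LeftSymPt {E : Type*} [NormedAddCommGroup E] [NormedSpace ℝ E] (x : E) : Prop :=
  ∀ y : E, BJOrth x y → BJOrth y x

/-- A point `x` is right symmetric if `y ⊥_B x` implies `x ⊥_B y` for all `y`. -/
def RightSymPt {E : Type*} [NormedAddCommGroup E] [NormedSpace ℝ E] (x : E) : Prop :=
  ∀ y : E, BJOrth y x → BJOrth x y

/-- A unit vector `x` is a smooth point if it has a unique norming functional. -/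
def SmoothPt {E : Type*} [NormedAddCommGroup E] [NormedSpace ℝ E] (x : E) : Prop :=
  ∃! f : E →L[ℝ] ℝ, ‖f‖ = 1 ∧ f x = 1

/-- A normed space is reflexive if the canonical embedding into the double dual is surjective. -/
def ReflexiveSp (E : Type*) [NormedAddCommGroup E] [NormedSpace ℝ E] : Prop :=
  Function.Surjective (NormedSpace.inclusionInDoubleDual ℝ E)

/-- The Kadets–Klee property: weak convergence of a sequence together with convergence of norms
implies norm convergence. -/
def KadetsKlee (E : Type*) [NormedAddCommGroup E] [NormedSpace ℝ E] : Prop :=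
  ∀ (x : ℕ → E) (x₀ : E),
    (∀ f : E →L[ℝ] ℝ, Tendsto (fun n => f (x n)) atTop (nhds (f x₀))) →
    Tendsto (fun n => ‖x n‖) atTop (nhds ‖x₀‖) →
    Tendsto (fun n => ‖x n - x₀‖) atTop (nhds 0)

/-- The norm attaining set `M_T` of a bounded linear operator. -/
def normAttain {X Y : Type*} [NormedAddCommGroup X] [NormedSpace ℝ X]
    [NormedAddCommGroup Y] [NormedSpace ℝ Y] (T : X →L[ℝ] Y) : Set X :=
  {x | ‖x‖ = 1 ∧ ‖T x‖ = ‖T‖}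

/-- `inPlus u v` means `v ∈ u⁺`, i.e. `‖u + t • v‖ ≥ ‖u‖` for all `t ≥ 0`. -/
def inPlus {E : Type*} [NormedAddCommGroup E] [NormedSpace ℝ E] (u v : E) : Prop :=
  ∀ t : ℝ, 0 ≤ t → ‖u‖ ≤ ‖u + t • v‖

/-- `inMinus u v` means `v ∈ u⁻`, i.e. `‖u + t • v‖ ≥ ‖u‖` for all `t ≤ 0`. -/
def inMinus {E : Type*} [NormedAddCommGroup E] [NormedSpace ℝ E] (u v : E) : Prop :=
  ∀ t : ℝ, t ≤ 0 → ‖u‖ ≤ ‖u + t • v‖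

/-!
A functional `f` norming `y` and vanishing at `x₁` exists because `y ⊥_B x₁`. The rank-one operator
`f ⊗ T y` vanishes at `x₁`, where `T` attains its norm, so `T ⊥_B f ⊗ T y`, and left symmetry
gives `f ⊗ T y ⊥_B T`. By strict convexity `f ⊗ T y` attains its norm only at `±y`. For compact
operators on a reflexive space, orthogonality passes to the values at such a point, so
`T y ⊥_B T y`, which means `T y = 0`.
-/

section Orthogonality

variable {E : Type*} [NormedAddCommGroup E] [NormedSpace ℝ E] {u v x y : E}

lemma bjOrth_self_iff : BJOrth x x ↔ x = 0 := by
  refine ⟨fun h => ?_, ?_⟩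
  · simpa using h (-1)
  · rintro rfl t
    simp

lemma inPlus_neg_neg : inPlus (-u) (-v) ↔ inPlus u v := by
  simp only [inPlus, smul_neg, ← neg_add, norm_neg]

lemma bjOrth_iff_inPlus_and_inPlus_neg : BJOrth u v ↔ inPlus u v ∧ inPlus u (-v) := by
  refine ⟨fun h => ⟨fun t _ => h t, fun t _ => by simpa using h (-t)⟩, fun h t => ?_⟩
  rcases le_total 0 t with ht | ht
  · exact h.1 t ht
  · simpa using h.2 (-t) (neg_nonneg.2 ht)

lemma norm_add_smul_le_norm_add_smul {s t : ℝ} (ht : 0 < t) (hts : t ≤ s)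
    (h : ‖u‖ ≤ ‖u + t • v‖) : ‖u + t • v‖ ≤ ‖u + s • v‖ := by
  have hconv : ConvexOn ℝ univ fun r : ℝ => ‖u + r • v‖ := by
    simpa [Function.comp_def, AffineMap.lineMap_apply, add_comm] using
      (convexOn_univ_norm (E := E)).comp_affineMap (AffineMap.lineMap u (u + v) : ℝ →ᵃ[ℝ] E)
  exact hconv.le_right_of_left_le'' (mem_univ 0) (mem_univ s) ht hts (by simpa using h)

lemma BJOrth.exists_dual_vector (h : BJOrth y x) (hy : y ≠ 0) :
    ∃ f : StrongDual ℝ E, ‖f‖ = 1 ∧ f y = ‖y‖ ∧ f x = 0 := by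
  let S : Submodule ℝ E := Submodule.span ℝ {x}
  have hnorm : ‖S.mkQL y‖ = ‖y‖ := by
    refine le_antisymm (Submodule.Quotient.norm_mk_le S y) (QuotientAddGroup.le_norm_iff.2 ?_)
    intro m hm
    obtain ⟨t, ht⟩ := Submodule.mem_span_singleton.1 ((Submodule.Quotient.eq S).1 hm)
    simpa [ht] using h t
  obtain ⟨g, hg, hgy⟩ := exists_dual_vector'' ℝ (S.mkQL y)
  have hfy : (g ∘L S.mkQL) y = ‖y‖ := by simpa [← hnorm] using hgy
  refine ⟨g ∘L S.mkQL, le_antisymm ?_ ?_, hfy, ?_⟩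
  · refine ContinuousLinearMap.opNorm_le_bound _ zero_le_one fun z => ?_
    exact (g.le_of_opNorm_le hg _).trans
      (mul_le_mul_of_nonneg_left (Submodule.Quotient.norm_mk_le S z) zero_le_one)
  · simpa [hfy, hy] using (g ∘L S.mkQL).ratio_le_opNorm y
  · have hx : S.mkQL x = 0 :=
      (Submodule.Quotient.mk_eq_zero S).2 (Submodule.mem_span_singleton_self x)
    rw [ContinuousLinearMap.comp_apply, hx, map_zero]

end Orthogonality

section CompactOperators

variable {𝕜 E F : Type*} [NontriviallyNormedField 𝕜] [SeminormedAddCommGroup E] [NormedSpace 𝕜 E]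
  [NormedAddCommGroup F] [NormedSpace 𝕜 F]

lemma isCompactOperator_smulRight [LocallyCompactSpace 𝕜] (f : StrongDual 𝕜 E) (z : F) :
    IsCompactOperator (f.smulRight z) :=
  (isCompactOperator_of_locallyCompactSpace_dom f).clm_comp
    (ContinuousLinearMap.toSpanSingleton 𝕜 z)

lemma continuousOn_comp_toWeakSpace_symm [SeparatingDual 𝕜 F] {T : E →L[𝕜] F}
    (hT : IsCompactOperator T) {s : Set E} (hs : Bornology.IsBounded s) :
    ContinuousOn (T ∘ (toWeakSpace 𝕜 E).symm) ((toWeakSpace 𝕜 E).symm ⁻¹' s) := by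
  intro w _
  obtain ⟨K, hK, hTK⟩ := IsCompactOperator.image_subset_compact_of_bounded
    (f := T.toLinearMap) hT hs
  refine (tendsto_iff_ultrafilter _ _ _).2 fun U hU => ?_
  have hUK : ∀ᶠ w' in U, T ((toWeakSpace 𝕜 E).symm w') ∈ K :=
    hU (eventually_mem_nhdsWithin.mono fun w' hw' => hTK ⟨_, hw', rfl⟩)
  obtain ⟨z, -, hz⟩ := hK.ultrafilter_le_nhds (U.map (T ∘ (toWeakSpace 𝕜 E).symm))
    (tendsto_principal.2 hUK)
  have hweak : Tendsto (WeakSpace.map T) U (𝓝 (WeakSpace.map T w)) :=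
    ((WeakSpace.map T).continuous.tendsto w).mono_left (hU.trans nhdsWithin_le_nhds)
  have hz_weak : Tendsto (WeakSpace.map T) U (𝓝 (toWeakSpaceCLM 𝕜 F z)) :=
    ((toWeakSpaceCLM 𝕜 F).continuous.tendsto z).comp hz
  obtain rfl : z = T ((toWeakSpace 𝕜 E).symm w) :=
    (toWeakSpace 𝕜 F).injective (tendsto_nhds_unique hz_weak hweak)
  exact hz

end CompactOperators

namespace ReflexiveSp

variable {E F : Type*} [NormedAddCommGroup E] [NormedSpace ℝ E]
  [NormedAddCommGroup F] [NormedSpace ℝ F] {A T : E →L[ℝ] F} {y : E}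

lemma isCompact_weakSpace_closedBall (hE : ReflexiveSp E) (r : ℝ) :
    IsCompact ((toWeakSpace ℝ E).symm ⁻¹' Metric.closedBall 0 r) := by
  have hball : (toWeakSpace ℝ E).symm ⁻¹' Metric.closedBall 0 r =
      NormedSpace.inclusionInDoubleDualWeak ℝ E ⁻¹'
        (WeakDual.toStrongDual ⁻¹' Metric.closedBall 0 r) := by
    have hJ := (NormedSpace.inclusionInDoubleDualLi ℝ (E := E)).isometry.preimage_closedBall 0 r
    rw [LinearIsometry.map_zero] at hJ
    exact congrArg ((toWeakSpace ℝ E).symm ⁻¹' ·) hJ.symm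
  rw [hball]
  refine (NormedSpace.isEmbedding_inclusionInDoubleDualWeak ℝ E).isInducing.isCompact_preimage'
    (WeakDual.isCompact_closedBall 0 r) fun φ _ => ?_
  obtain ⟨x, hx⟩ := hE (WeakDual.toStrongDual φ)
  exact ⟨toWeakSpace ℝ E x, hx⟩

lemma isCompact_weakSpace_setOf_le_norm_apply (hE : ReflexiveSp E) (hT : IsCompactOperator T)
    (r : ℝ) : IsCompact ((toWeakSpace ℝ E).symm ⁻¹' {x | ‖x‖ ≤ 1 ∧ r ≤ ‖T x‖}) := by
  have hball := hE.isCompact_weakSpace_closedBall 1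
  have hcont := continuousOn_comp_toWeakSpace_symm hT
    (Metric.isBounded_closedBall (x := (0 : E)) (r := 1))
  have hclosed := hcont.norm.preimage_isClosed_of_isClosed hball.isClosed (isClosed_Ici (a := r))
  refine hball.of_isClosed_subset ?_ ?_
  · convert hclosed using 1
    ext w
    simp
  · intro w hw
    simpa using hw.1

lemma exists_norm_apply_eq_norm (hE : ReflexiveSp E) (hT : IsCompactOperator T) :
    ∃ x, ‖x‖ ≤ 1 ∧ ‖T x‖ = ‖T‖ := by
  have hcont := continuousOn_comp_toWeakSpace_symm hT
    (Metric.isBounded_closedBall (x := (0 : E)) (r := 1))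
  obtain ⟨w, hw, hmax⟩ := (hE.isCompact_weakSpace_closedBall 1).exists_isMaxOn
    ⟨0, by simp⟩ hcont.norm
  have hw1 : ‖(toWeakSpace ℝ E).symm w‖ ≤ 1 := by simpa using hw
  refine ⟨(toWeakSpace ℝ E).symm w, hw1, le_antisymm (T.unit_le_opNorm _ hw1) ?_⟩
  refine T.opNorm_le_of_unit_norm (norm_nonneg _) fun x hx => ?_
  exact hmax (a := toWeakSpace ℝ E x) (by simp [hx])

lemma exists_forall_norm_le_norm_add_smul (hE : ReflexiveSp E) (hA : IsCompactOperator A)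
    (hT : IsCompactOperator T) (h : inPlus A T) :
    ∃ x, ‖x‖ ≤ 1 ∧ ∀ t : ℝ, 0 < t → ‖A‖ ≤ ‖A x + t • T x‖ := by
  let C (t : Ioi (0 : ℝ)) : Set (WeakSpace ℝ E) :=
    (toWeakSpace ℝ E).symm ⁻¹' {x | ‖x‖ ≤ 1 ∧ ‖A‖ ≤ ‖(A + t.1 • T) x‖}
  have hcompact (t) : IsCompact (C t) :=
    hE.isCompact_weakSpace_setOf_le_norm_apply (hA.add (hT.smul t.1)) _
  have hnonempty (t) : (C t).Nonempty := by
    obtain ⟨x, hx, hxeq⟩ :=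
      hE.exists_norm_apply_eq_norm (T := A + t.1 • T) (hA.add (hT.smul t.1))
    exact ⟨toWeakSpace ℝ E x, hx, (h t.1 t.2.le).trans_eq hxeq.symm⟩
  -- By convexity, the inequality for one `t > 0` implies it for all larger ones, because
  -- `‖A x‖ ≤ ‖A‖` on the unit ball.
  have hmono : Monotone C := fun t s hts w hw =>
    ⟨hw.1, hw.2.trans (norm_add_smul_le_norm_add_smul t.2 hts
      ((A.unit_le_opNorm _ hw.1).trans hw.2))⟩
  obtain ⟨w, hw⟩ := IsCompact.nonempty_iInter_of_directed_nonempty_isCompact_isClosed C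
    hmono.directed_ge hnonempty hcompact fun t => (hcompact t).isClosed
  rw [mem_iInter] at hw
  exact ⟨(toWeakSpace ℝ E).symm w, (hw ⟨1, one_pos (α := ℝ)⟩).1, fun t ht => (hw ⟨t, ht⟩).2⟩

lemma exists_mem_normAttain_inPlus (hE : ReflexiveSp E) (hA : IsCompactOperator A)
    (hT : IsCompactOperator T) (hA0 : A ≠ 0) (h : inPlus A T) :
    ∃ x ∈ normAttain A, inPlus (A x) (T x) := by
  obtain ⟨x, hx, hle⟩ := hE.exists_forall_norm_le_norm_add_smul hA hT h
  have hAx_le : ‖A x‖ ≤ ‖A‖ := A.unit_le_opNorm x hx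
  have hle_Ax : ‖A‖ ≤ ‖A x‖ := by
    have hlim : Tendsto (fun t : ℝ => ‖A x + t • T x‖) (𝓝[>] 0) (𝓝 ‖A x + (0 : ℝ) • T x‖) :=
      (Continuous.tendsto (by fun_prop) 0).mono_left nhdsWithin_le_nhds
    simpa using ge_of_tendsto hlim (eventually_mem_nhdsWithin.mono hle)
  have hx1 : 1 ≤ ‖x‖ :=
    (le_mul_iff_one_le_right (norm_pos_iff.2 hA0)).1 (hle_Ax.trans (A.le_opNorm x))
  refine ⟨x, ⟨hx.antisymm hx1, hAx_le.antisymm hle_Ax⟩, fun t ht => ?_⟩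
  rcases ht.eq_or_lt with rfl | ht
  · simp
  · exact hAx_le.trans (hle t ht)

lemma inPlus_apply_of_normAttain_subset (hE : ReflexiveSp E) (hA : IsCompactOperator A)
    (hT : IsCompactOperator T) (hM : normAttain A ⊆ {y, -y}) (h : inPlus A T) :
    inPlus (A y) (T y) := by
  rcases eq_or_ne A 0 with rfl | hA0
  · intro t _
    simp
  obtain ⟨x, hx, hplus⟩ := hE.exists_mem_normAttain_inPlus hA hT hA0 h
  rcases hM hx with rfl | rfl
  · exact hplus
  · simpa only [map_neg, inPlus_neg_neg] using hplus

lemma bjOrth_apply_of_normAttain_subset (hE : ReflexiveSp E) (hA : IsCompactOperator A)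
    (hT : IsCompactOperator T) (hM : normAttain A ⊆ {y, -y}) (h : BJOrth A T) :
    BJOrth (A y) (T y) := by
  rw [bjOrth_iff_inPlus_and_inPlus_neg] at h ⊢
  exact ⟨hE.inPlus_apply_of_normAttain_subset hA hT hM h.1,
    hE.inPlus_apply_of_normAttain_subset hA hT.neg hM h.2⟩

end ReflexiveSp

section NormAttain

variable {E F : Type*} [NormedAddCommGroup E] [NormedSpace ℝ E]
  [NormedAddCommGroup F] [NormedSpace ℝ F] {A T : E →L[ℝ] F} {f : StrongDual ℝ E} {x y : E}

lemma BJOrth.of_apply_of_mem_normAttain (hx : x ∈ normAttain T) (h : BJOrth (T x) (A x)) :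
    BJOrth T A := fun t =>
  calc ‖T‖ = ‖T x‖ := hx.2.symm
    _ ≤ ‖(T + t • A) x‖ := h t
    _ ≤ ‖T + t • A‖ := (T + t • A).unit_le_opNorm x hx.1.le

lemma eq_of_mem_normAttain_of_apply_eq [StrictConvexSpace ℝ E] (hT : T ≠ 0)
    (hx : x ∈ normAttain T) (hy : y ∈ normAttain T) (hxy : T x = T y) : x = y := by
  by_contra hne
  let m : E := (1 / 2 : ℝ) • x + (1 / 2 : ℝ) • y
  have hm : ‖m‖ < 1 :=
    norm_combo_lt_of_ne hx.1.le hy.1.le hne (by norm_num) (by norm_num) (by norm_num)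
  have hTm : T m = T y := by
    simp only [m, map_add, map_smul, hxy]
    module
  have hle := T.le_opNorm m
  rw [hTm, hy.2, le_mul_iff_one_le_right (norm_pos_iff.2 hT)] at hle
  exact hm.not_ge hle

lemma normAttain_subset_pair [StrictConvexSpace ℝ E] (hf : f ≠ 0) (hy : y ∈ normAttain f) :
    normAttain f ⊆ {y, -y} := by
  intro x hx
  have hy_neg : -y ∈ normAttain f := by simpa [normAttain] using hy
  rcases abs_eq_abs.1 (hx.2.trans hy.2.symm) with hxy | hxy
  · exact .inl (eq_of_mem_normAttain_of_apply_eq hf hx hy hxy)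
  · exact .inr (eq_of_mem_normAttain_of_apply_eq hf hx hy_neg (by rw [hxy, map_neg]))

lemma normAttain_smulRight {z : F} (hz : z ≠ 0) : normAttain (f.smulRight z) = normAttain f := by
  ext x
  simp [normAttain, norm_smul, hz, ContinuousLinearMap.norm_smulRight_apply]

end NormAttain

theorem left_symmetric_operator_vanishes_on_orthogonal
    {X Y : Type*} [NormedAddCommGroup X] [NormedSpace ℝ X]
    [StrictConvexSpace ℝ X] [CompleteSpace X]
    [NormedAddCommGroup Y] [NormedSpace ℝ Y]
    (hrefl : ReflexiveSp X)
    (T : X →L[ℝ] Y) (hTcpt : IsCompactOperator T)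
    (hTsym : LeftSymPt T) (hTnorm : ‖T‖ = 1)
    (x₁ : X) (hx₁ : x₁ ∈ normAttain T)
    (y : X) (hy : ‖y‖ = 1) (hyx : BJOrth y x₁) :
    T y = 0 := by
  by_contra hTy
  obtain ⟨f, hf, hfy, hfx₁⟩ := hyx.exists_dual_vector (norm_ne_zero_iff.1 (by simp [hy]))
  have hf0 : f ≠ 0 := norm_ne_zero_iff.1 (by simp [hf])
  have hyf : y ∈ normAttain f := ⟨hy, by simp [hfy, hy, hf]⟩
  let A : X →L[ℝ] Y := f.smulRight (T y)
  have hTA : BJOrth T A := .of_apply_of_mem_normAttain hx₁ fun t => by simp [A, hfx₁]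
  have hM : normAttain A ⊆ {y, -y} :=
    (normAttain_smulRight hTy).trans_subset (normAttain_subset_pair hf0 hyf)
  have horth : BJOrth (A y) (T y) := hrefl.bjOrth_apply_of_normAttain_subset
    (isCompactOperator_smulRight f (T y)) hTcpt hM (hTsym A hTA)
  have hAy : A y = T y := by simp [A, hfy, hy]
  rw [hAy, bjOrth_self_iff] at horth
  exact hTy horth
end

section
/- Let X be a real reflexive Banach space and let Y be a real reflexive, smooth Banach space. Let Z = X ⊕₁ ℝ denote X × ℝ with norm ‖(x,r)‖ = ‖x‖ + |r|, and let T : Z → Y be a nonzero compact bounded linear operator with ‖T‖ = 1 = ‖T(0,1)‖. Then T is left symmetric in the operator space if and only if there exist a unit vector w ∈ Y and a norm-one continuous linear functional f on Z such that T(z) = f(z)·w for all z ∈ Z, the kernel of f equals X × {0}, and w is a left symmetric point of Y. -/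
open Filter Topology Set

/-!
The operators on an `ℓ¹`-sum form the `ℓ^∞`-sum of the operators on its summands, so `T` becomes a
pair `(a, b)` with `a = T(·, 0)`, `b = T(0, 1)` and `‖a‖ ≤ ‖b‖`. As the maximum is attained at `b`,
`(a, b) ⊥_B (a, 0)`. If `a ≠ 0`, then `(a, 0) ⊥_B (a, b)` fails: subtracting a small positive
multiple of `(a, b)` shrinks the first coordinate and keeps the second one below `‖a‖`. Hence left
symmetry forces `a = 0`. Since orthogonality only has to be tested for small `t`, where the first
coordinate of `(0, b) + t • (c, d)` is negligible, `(0, b)` is left symmetric exactly when `b` is.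
-/

section BirkhoffJames

variable {E F : Type*} [NormedAddCommGroup E] [NormedSpace ℝ E]
  [NormedAddCommGroup F] [NormedSpace ℝ F]

theorem BJOrth.zero_left (y : E) : BJOrth 0 y := fun t => by simp

theorem BJOrth.zero_right (x : E) : BJOrth x 0 := fun t => by simp

theorem BJOrth.smul_left {x y : E} (h : BJOrth x y) (c : ℝ) : BJOrth (c • x) y := by
  rcases eq_or_ne c 0 with rfl | hc
  · simpa using BJOrth.zero_left y
  intro t
  calc ‖c • x‖ = ‖c‖ * ‖x‖ := norm_smul c x
    _ ≤ ‖c‖ * ‖x + (c⁻¹ * t) • y‖ := by gcongr; exact h _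
    _ = ‖c • x + t • y‖ := by rw [← norm_smul, smul_add, smul_smul, mul_inv_cancel_left₀ hc]

theorem BJOrth.smul_right {x y : E} (h : BJOrth x y) (c : ℝ) : BJOrth x (c • y) := fun t => by
  simpa only [smul_smul] using h (t * c)

theorem LeftSymPt.smul {x : E} (h : LeftSymPt x) (c : ℝ) : LeftSymPt (c • x) := by
  intro y hy
  rcases eq_or_ne c 0 with rfl | hc
  · simpa using BJOrth.zero_right y
  have hxy : BJOrth x y := by simpa [smul_smul, hc] using hy.smul_left c⁻¹
  exact (h y hxy).smul_right c

theorem bjOrth_map_iff (e : E →ₗᵢ[ℝ] F) {x y : E} : BJOrth (e x) (e y) ↔ BJOrth x y :=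
  forall_congr' fun t => by rw [← map_smul, ← map_add, e.norm_map, e.norm_map]

theorem leftSymPt_map_iff (e : E ≃ₗᵢ[ℝ] F) {x : E} : LeftSymPt (e x) ↔ LeftSymPt x := by
  simp only [LeftSymPt, e.surjective.forall]
  exact forall_congr' fun y =>
    imp_congr (bjOrth_map_iff e.toLinearIsometry) (bjOrth_map_iff e.toLinearIsometry)

theorem convexOn_norm_add_smul {V : Type*} [SeminormedAddCommGroup V] [NormedSpace ℝ V]
    (x y : V) : ConvexOn ℝ univ fun t : ℝ => ‖x + t • y‖ := by
  have hline : (fun t : ℝ => ‖x + t • y‖) = norm ∘ AffineMap.lineMap x (x + y) := by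
    ext t
    simp [AffineMap.lineMap_apply, add_comm]
  rw [hline]
  exact convexOn_univ_norm.comp_affineMap _

theorem bjOrth_iff_eventually {x y : E} :
    BJOrth x y ↔ ∀ᶠ t : ℝ in 𝓝 0, ‖x‖ ≤ ‖x + t • y‖ := by
  refine ⟨Eventually.of_forall, fun h t => ?_⟩
  have hmin : IsLocalMin (fun t : ℝ => ‖x + t • y‖) 0 := by simpa [IsLocalMin, IsMinFilter] using h
  simpa using IsMinOn.of_isLocalMin_of_convex_univ hmin (convexOn_norm_add_smul x y) t

end BirkhoffJames

section MaxNorm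

variable {E F : Type*} [NormedAddCommGroup E] [NormedSpace ℝ E]
  [NormedAddCommGroup F] [NormedSpace ℝ F]

theorem bjOrth_prodMk_zero_of_norm_le {a : E} {b : F} (h : ‖a‖ ≤ ‖b‖) (c : E) :
    BJOrth (a, b) (c, (0 : F)) := fun t => by
  simp [Prod.norm_def, h]

theorem eq_zero_of_bjOrth_prodMk {a : E} {b : F} (h : BJOrth (a, (0 : F)) (a, b)) : a = 0 := by
  by_contra ha
  have ha_pos : 0 < ‖a‖ := norm_pos_iff.mpr ha
  set s : ℝ := ‖a‖ / (1 + ‖a‖ + ‖b‖)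
  have hs_pos : 0 < s := by positivity
  have hs_mul : s * (1 + ‖a‖ + ‖b‖) = ‖a‖ := div_mul_cancel₀ _ (by positivity)
  have hs_lt_one : s < 1 := (div_lt_one (by positivity)).mpr (by linarith [norm_nonneg b])
  have hfst : ‖a + (-s) • a‖ < ‖a‖ := by
    rw [show a + (-s) • a = (1 - s) • a by module, norm_smul, Real.norm_of_nonneg (by linarith)]
    exact mul_lt_of_lt_one_left ha_pos (sub_lt_self 1 hs_pos)
  have hsnd : ‖0 + (-s) • b‖ < ‖a‖ := by
    rw [zero_add, norm_smul, norm_neg, Real.norm_of_nonneg hs_pos.le]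
    nlinarith
  have hle : ‖a‖ ≤ max ‖a + (-s) • a‖ ‖0 + (-s) • b‖ := by
    simpa [Prod.norm_def] using h (-s)
  exact hle.not_gt (max_lt hfst hsnd)

theorem bjOrth_zero_prodMk_iff {b d : F} {c : E} :
    BJOrth ((0 : E), b) (c, d) ↔ BJOrth b d := by
  have hnorm (t : ℝ) : ‖((0 : E), b) + t • (c, d)‖ = max ‖t • c‖ ‖b + t • d‖ := by
    simp [Prod.norm_def]
  have hnorm_zero : ‖((0 : E), b)‖ = ‖b‖ := by simp [Prod.norm_def]
  constructor
  · intro h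
    rcases eq_or_ne b 0 with rfl | hb
    · exact BJOrth.zero_left d
    have hsmall : ∀ᶠ t : ℝ in 𝓝 0, ‖t • c‖ < ‖b‖ := by
      have hcont : Continuous fun t : ℝ => ‖t • c‖ := by fun_prop
      exact hcont.continuousAt.eventually_lt_const (by simpa using hb)
    refine bjOrth_iff_eventually.mpr (hsmall.mono fun t ht => ?_)
    have hle := h t
    rw [hnorm, hnorm_zero] at hle
    exact (le_max_iff.mp hle).resolve_left ht.not_ge
  · intro h t
    rw [hnorm, hnorm_zero]
    exact (h t).trans (le_max_right _ _)

theorem BJOrth.prodMk_zero_left {b d : F} (h : BJOrth d b) (c : E) :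
    BJOrth (c, d) ((0 : E), b) := fun t => by
  simpa only [Prod.norm_def, Prod.fst_add, Prod.snd_add, Prod.smul_mk, smul_zero, add_zero] using
    max_le_max_left ‖c‖ (h t)

theorem leftSymPt_zero_prodMk_iff {b : F} : LeftSymPt ((0 : E), b) ↔ LeftSymPt b := by
  constructor
  · intro h d hbd
    exact bjOrth_zero_prodMk_iff.mp (h ((0 : E), d) (bjOrth_zero_prodMk_iff.mpr hbd))
  · rintro h ⟨c, d⟩ hbd
    exact (h d (bjOrth_zero_prodMk_iff.mp hbd)).prodMk_zero_left c

theorem leftSymPt_prodMk_iff_of_norm_le {a : E} {b : F} (hab : ‖a‖ ≤ ‖b‖) :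
    LeftSymPt (a, b) ↔ a = 0 ∧ LeftSymPt b := by
  constructor
  · intro h
    obtain rfl : a = 0 := eq_zero_of_bjOrth_prodMk (h _ (bjOrth_prodMk_zero_of_norm_le hab a))
    exact ⟨rfl, leftSymPt_zero_prodMk_iff.mp h⟩
  · rintro ⟨rfl, h⟩
    exact leftSymPt_zero_prodMk_iff.mpr h

end MaxNorm

section L1SumOperators

variable {𝕜 E F G : Type*} [NontriviallyNormedField 𝕜]
  [SeminormedAddCommGroup E] [NormedSpace 𝕜 E] [SeminormedAddCommGroup F] [NormedSpace 𝕜 F]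
  [SeminormedAddCommGroup G] [NormedSpace 𝕜 G]

theorem norm_coprod_comp_ofLp_one (A : E →L[𝕜] G) (B : F →L[𝕜] G) :
    ‖(A.coprod B).comp (WithLp.prodContinuousLinearEquiv 1 𝕜 E F).toContinuousLinearMap‖ =
      max ‖A‖ ‖B‖ := by
  set S := (A.coprod B).comp (WithLp.prodContinuousLinearEquiv 1 𝕜 E F).toContinuousLinearMap
  apply le_antisymm
  · refine S.opNorm_le_bound (by positivity) fun z => ?_
    calc ‖A z.fst + B z.snd‖ ≤ ‖A‖ * ‖z.fst‖ + ‖B‖ * ‖z.snd‖ :=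
          norm_add_le_of_le (A.le_opNorm _) (B.le_opNorm _)
      _ ≤ max ‖A‖ ‖B‖ * ‖z.fst‖ + max ‖A‖ ‖B‖ * ‖z.snd‖ := by
          gcongr
          exacts [le_max_left _ _, le_max_right _ _]
      _ = max ‖A‖ ‖B‖ * ‖z‖ := by rw [WithLp.prod_norm_eq_of_L1, mul_add]
  · refine max_le (A.opNorm_le_bound (norm_nonneg _) fun x => ?_)
      (B.opNorm_le_bound (norm_nonneg _) fun y => ?_)
    · simpa [S] using S.le_opNorm (WithLp.toLp 1 (x, 0))
    · simpa [S] using S.le_opNorm (WithLp.toLp 1 (0, y))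

variable (𝕜 E F G) in
/-- The isometric identification of the `ℓ^∞`-sum of the spaces of operators on `E` and on `F` with
the space of operators on `E ⊕₁ F`. The `ℓ^∞`-sum is the plain product `×`, which carries the
maximum norm. -/
noncomputable def coprodL1LIE :
    (E →L[𝕜] G) × (F →L[𝕜] G) ≃ₗᵢ[𝕜] (WithLp 1 (E × F) →L[𝕜] G) where
  toLinearEquiv := (ContinuousLinearMap.coprodEquivL 𝕜).toLinearEquiv.trans
    ((WithLp.prodContinuousLinearEquiv 1 𝕜 E F).symm.arrowCongr
      (ContinuousLinearEquiv.refl 𝕜 G)).toLinearEquiv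
  norm_map' p := by
    rw [Prod.norm_def, ← norm_coprod_comp_ofLp_one]
    rfl

theorem coprodL1LIE_apply (A : E →L[𝕜] G) (B : F →L[𝕜] G) (z : WithLp 1 (E × F)) :
    coprodL1LIE 𝕜 E F G (A, B) z = A z.fst + B z.snd :=
  rfl

theorem eq_smulRight_sndL_of_apply_toLp_zero {T : WithLp 1 (E × 𝕜) →L[𝕜] G}
    (hT : ∀ x : E, T (WithLp.toLp 1 (x, 0)) = 0) :
    T = (WithLp.sndL 1 𝕜 E 𝕜).smulRight (T (WithLp.toLp 1 (0, 1))) := by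
  obtain ⟨⟨A, B⟩, rfl⟩ := (coprodL1LIE 𝕜 E 𝕜 G).surjective T
  have hA : A = 0 := by
    ext x
    simpa [coprodL1LIE_apply] using hT x
  ext z
  simp [coprodL1LIE_apply, hA, ← map_smul]

end L1SumOperators

section LeftSymmetricOperators

variable {X F Y : Type*} [NormedAddCommGroup X] [NormedSpace ℝ X]
  [NormedAddCommGroup F] [NormedSpace ℝ F] [NormedAddCommGroup Y] [NormedSpace ℝ Y]

theorem leftSymPt_coprodL1LIE_iff {A : X →L[ℝ] Y} {B : F →L[ℝ] Y} (hAB : ‖A‖ ≤ ‖B‖) :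
    LeftSymPt (coprodL1LIE ℝ X F Y (A, B)) ↔ A = 0 ∧ LeftSymPt B := by
  rw [leftSymPt_map_iff, leftSymPt_prodMk_iff_of_norm_le hAB]

theorem leftSymPt_iff_of_norm_apply_toLp_zero_one {T : WithLp 1 (X × ℝ) →L[ℝ] Y}
    (hT : ‖T (WithLp.toLp 1 (0, 1))‖ = ‖T‖) :
    LeftSymPt T ↔
      (∀ x : X, T (WithLp.toLp 1 (x, 0)) = 0) ∧ LeftSymPt (T (WithLp.toLp 1 (0, 1))) := by
  obtain ⟨⟨A, B⟩, rfl⟩ := (coprodL1LIE ℝ X ℝ Y).surjective T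
  obtain ⟨y, rfl⟩ := (ContinuousLinearMap.toSpanSingletonLIE ℝ Y).surjective B
  have hA (x : X) : coprodL1LIE ℝ X ℝ Y (A, ContinuousLinearMap.toSpanSingletonLIE ℝ Y y)
      (WithLp.toLp 1 (x, 0)) = A x := by simp [coprodL1LIE_apply]
  have hy : coprodL1LIE ℝ X ℝ Y (A, ContinuousLinearMap.toSpanSingletonLIE ℝ Y y)
      (WithLp.toLp 1 (0, 1)) = y := by simp [coprodL1LIE_apply]
  rw [hy, LinearIsometryEquiv.norm_map, Prod.norm_def] at hT
  have hAy : ‖A‖ ≤ ‖ContinuousLinearMap.toSpanSingletonLIE ℝ Y y‖ := by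
    rw [LinearIsometryEquiv.norm_map, hT]
    exact le_max_left _ _
  simp only [leftSymPt_coprodL1LIE_iff hAy, leftSymPt_map_iff, hA, hy, ContinuousLinearMap.ext_iff,
    zero_apply]

end LeftSymmetricOperators

theorem left_symmetric_operator_on_l1_sum_characterization_general
    {X Y : Type*} [NormedAddCommGroup X] [NormedSpace ℝ X]
    [NormedAddCommGroup Y] [NormedSpace ℝ Y]
    (T : WithLp 1 (X × ℝ) →L[ℝ] Y) (hTnorm : ‖T‖ = 1)
    (hTe : ‖T ((WithLp.equiv 1 (X × ℝ)).symm (0, 1))‖ = 1) :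
    LeftSymPt T ↔
      ∃ (w : Y) (f : WithLp 1 (X × ℝ) →L[ℝ] ℝ), ‖w‖ = 1 ∧ ‖f‖ = 1 ∧
        (∀ z : WithLp 1 (X × ℝ), T z = f z • w) ∧
        (∀ z : WithLp 1 (X × ℝ), f z = 0 ↔ (WithLp.equiv 1 (X × ℝ) z).2 = 0) ∧
        LeftSymPt w := by
  change ‖T (WithLp.toLp 1 (0, 1))‖ = 1 at hTe
  rw [leftSymPt_iff_of_norm_apply_toLp_zero_one (hTe.trans hTnorm.symm)]
  constructor
  · rintro ⟨hTX, hsym⟩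
    have hT := eq_smulRight_sndL_of_apply_toLp_zero hTX
    refine ⟨_, WithLp.sndL 1 ℝ X ℝ, hTe, ?_, DFunLike.congr_fun hT, fun z => Iff.rfl, hsym⟩
    calc ‖WithLp.sndL 1 ℝ X ℝ‖ = ‖WithLp.sndL 1 ℝ X ℝ‖ * ‖T (WithLp.toLp 1 (0, 1))‖ := by
          rw [hTe, mul_one]
      _ = ‖T‖ := by rw [← ContinuousLinearMap.norm_smulRight_apply, ← hT]
      _ = 1 := hTnorm
  · rintro ⟨w, f, -, -, hTf, hker, hsym⟩
    refine ⟨fun x => ?_, ?_⟩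
    · rw [hTf, (hker _).mpr rfl, zero_smul]
    · rw [hTf]
      exact hsym.smul _

theorem left_symmetric_operator_on_l1_sum_characterization
    {X Y : Type*} [NormedAddCommGroup X] [NormedSpace ℝ X] [CompleteSpace X]
    [NormedAddCommGroup Y] [NormedSpace ℝ Y] [CompleteSpace Y]
    (hXrefl : ReflexiveSp X) (hYrefl : ReflexiveSp Y)
    (hYsmooth : ∀ y : Y, ‖y‖ = 1 → SmoothPt y)
    (T : WithLp 1 (X × ℝ) →L[ℝ] Y) (hTcpt : IsCompactOperator T) (hT0 : T ≠ 0)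
    (hTnorm : ‖T‖ = 1)
    (hTe : ‖T ((WithLp.equiv 1 (X × ℝ)).symm (0, 1))‖ = 1) :
    LeftSymPt T ↔
      ∃ (w : Y) (f : WithLp 1 (X × ℝ) →L[ℝ] ℝ), ‖w‖ = 1 ∧ ‖f‖ = 1 ∧
        (∀ z : WithLp 1 (X × ℝ), T z = f z • w) ∧
        (∀ z : WithLp 1 (X × ℝ), f z = 0 ↔ (WithLp.equiv 1 (X × ℝ) z).2 = 0) ∧
        LeftSymPt w :=
  left_symmetric_operator_on_l1_sum_characterization_general T hTnorm hTe
end
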